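/- arXiv:1501.02012 — 3 statements merged into one kernel-verified Lean document; each statement's English description precedes it below -/
import Mathlib

section
/- Fix d ≥ 1, a real number ρ > 0, a d×d real matrix F, and a vector a ∈ ℝ^d. Let b* = ρ(I_d + ρFFᵀ)⁻¹Fa. Then I_d + ρFᵀF is invertible and ρ‖Fᵀb* − a‖² + ‖b*‖² = ρ · aᵀ(I_d + ρFᵀF)⁻¹a. -/
open Matrix Finset

/-! Write `M = 1 + ρ Fᴴ F` and `c = M⁻¹ a`. The push-through identity `(1 + ρ F Fᴴ)⁻¹ F = F M⁻¹`
turns the filter into `b = ρ F c`, whose residual is `Fᴴ b - a = (M - 1) c - M c = -c`. The energy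
is therefore `ρ ‖c‖² + ρ² ‖F c‖²`, which is `ρ` times the quadratic form of `M` at `c`. -/

section CommRing

variable {m n R : Type*} [Fintype m] [Fintype n] [DecidableEq n] [CommRing R]

lemma isUnit_one_add_mul_comm [DecidableEq m] (A : Matrix m n R) (B : Matrix n m R) :
    IsUnit (1 + A * B) ↔ IsUnit (1 + B * A) := by
  rw [isUnit_iff_isUnit_det, isUnit_iff_isUnit_det, det_one_add_mul_comm]

lemma inv_one_add_mul_mul_eq_mul_inv [DecidableEq m] {A : Matrix m n R} {B : Matrix n m R}
    (h : IsUnit (1 + B * A)) : (1 + A * B)⁻¹ * A = A * (1 + B * A)⁻¹ := by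
  have := h.invertible
  have := ((isUnit_one_add_mul_comm A B).mpr h).invertible
  have hcomm : A * (1 + B * A) = (1 + A * B) * A := by
    rw [Matrix.mul_add, Matrix.add_mul, Matrix.mul_one, Matrix.one_mul, Matrix.mul_assoc]
  rw [inv_mul_eq_iff_eq_mul_of_invertible, ← Matrix.mul_assoc, ← hcomm,
    mul_inv_cancel_right_of_invertible]

variable [StarRing R]

/-- The average energy `ρ ‖Fᴴ b - a‖² + ‖b‖²` of the effective noise of an integer-forcing receiver
with filtering vector `b` and integer vector `a`. The squared Euclidean norm of `v` is encoded as
`star v ⬝ᵥ v`, which makes sense over every commutative star ring. -/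
def effectiveNoiseEnergy (ρ : R) (F : Matrix m n R) (a : n → R) (b : m → R) : R :=
  ρ * (star (Fᴴ *ᵥ b - a) ⬝ᵥ (Fᴴ *ᵥ b - a)) + star b ⬝ᵥ b

lemma one_add_smul_conjTranspose_mul_self_mulVec (ρ : R) (F : Matrix m n R) (c : n → R) :
    (1 + ρ • (Fᴴ * F)) *ᵥ c = c + ρ • (Fᴴ *ᵥ (F *ᵥ c)) := by
  rw [add_mulVec, one_mulVec, smul_mulVec, mulVec_mulVec]

lemma star_one_add_smul_conjTranspose_mul_self_mulVec_dotProduct {ρ : R} (hρ : IsSelfAdjoint ρ)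
    (F : Matrix m n R) (c : n → R) :
    star ((1 + ρ • (Fᴴ * F)) *ᵥ c) ⬝ᵥ c = star c ⬝ᵥ c + ρ * (star (F *ᵥ c) ⬝ᵥ (F *ᵥ c)) := by
  rw [one_add_smul_conjTranspose_mul_self_mulVec, star_add, star_smul, hρ.star_eq, star_mulVec,
    conjTranspose_conjTranspose, add_dotProduct, smul_dotProduct, ← dotProduct_mulVec, smul_eq_mul]

lemma effectiveNoiseEnergy_mulVec_smul_mulVec {ρ : R} (hρ : IsSelfAdjoint ρ)
    (F : Matrix m n R) (c : n → R) :
    effectiveNoiseEnergy ρ F ((1 + ρ • (Fᴴ * F)) *ᵥ c) (ρ • (F *ᵥ c)) =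
      ρ * (star ((1 + ρ • (Fᴴ * F)) *ᵥ c) ⬝ᵥ c) := by
  have hresidual : Fᴴ *ᵥ (ρ • (F *ᵥ c)) - (1 + ρ • (Fᴴ * F)) *ᵥ c = -c := by
    rw [one_add_smul_conjTranspose_mul_self_mulVec, mulVec_smul]
    abel
  rw [effectiveNoiseEnergy, hresidual,
    star_one_add_smul_conjTranspose_mul_self_mulVec_dotProduct hρ]
  simp only [star_neg, neg_dotProduct_neg, star_smul, hρ.star_eq, smul_dotProduct, dotProduct_smul,
    smul_eq_mul]
  ring

lemma effectiveNoiseEnergy_smul_inv_mulVec [DecidableEq m] {ρ : R} (hρ : IsSelfAdjoint ρ)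
    {F : Matrix m n R} (hF : IsUnit (1 + ρ • (Fᴴ * F))) (a : n → R) :
    effectiveNoiseEnergy ρ F a (ρ • ((1 + ρ • (F * Fᴴ))⁻¹ *ᵥ (F *ᵥ a))) =
      ρ * (star a ⬝ᵥ (1 + ρ • (Fᴴ * F))⁻¹ *ᵥ a) := by
  have hpush : (1 + ρ • (F * Fᴴ))⁻¹ * F = F * (1 + ρ • (Fᴴ * F))⁻¹ := by
    simpa only [Matrix.mul_smul, Matrix.smul_mul] using
      inv_one_add_mul_mul_eq_mul_inv (A := F) (B := ρ • Fᴴ) (by rwa [Matrix.smul_mul])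
  have ha : (1 + ρ • (Fᴴ * F)) *ᵥ ((1 + ρ • (Fᴴ * F))⁻¹ *ᵥ a) = a := by
    rw [mulVec_mulVec, mul_nonsing_inv _ ((isUnit_iff_isUnit_det _).mp hF), one_mulVec]
  have henergy := effectiveNoiseEnergy_mulVec_smul_mulVec hρ F ((1 + ρ • (Fᴴ * F))⁻¹ *ᵥ a)
  rwa [ha, mulVec_mulVec, ← hpush, ← mulVec_mulVec] at henergy

end CommRing

section OrderedField

variable {m n K : Type*} [Fintype m] [Fintype n] [DecidableEq n]
  [Field K] [PartialOrder K] [StarRing K] [StarOrderedRing K]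

lemma isUnit_one_add_smul_conjTranspose_mul_self {ρ : K} (hρ : 0 ≤ ρ) (F : Matrix m n K) :
    IsUnit (1 + ρ • (Fᴴ * F)) :=
  (PosDef.one.add_posSemidef ((posSemidef_conjTranspose_mul_self F).smul hρ)).isUnit

theorem IF_effective_noise_energy_general [DecidableEq m] {ρ : K} (hρ : 0 ≤ ρ)
    (F : Matrix m n K) (a : n → K) :
    IsUnit (1 + ρ • (Fᴴ * F)) ∧
      effectiveNoiseEnergy ρ F a (ρ • ((1 + ρ • (F * Fᴴ))⁻¹ *ᵥ (F *ᵥ a))) =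
        ρ * (star a ⬝ᵥ (1 + ρ • (Fᴴ * F))⁻¹ *ᵥ a) :=
  have hF := isUnit_one_add_smul_conjTranspose_mul_self hρ F
  ⟨hF, effectiveNoiseEnergy_smul_inv_mulVec (.of_nonneg hρ) hF a⟩

end OrderedField

/-- The minimal effective-noise energy of the integer-forcing receiver: with
`b* = ρ (I + ρ F Fᵀ)⁻¹ F a`, the matrix `I + ρ Fᵀ F` is invertible and
`ρ‖Fᵀb* - a‖² + ‖b*‖² = ρ · aᵀ (I + ρ Fᵀ F)⁻¹ a`. -/
theorem IF_effective_noise_energy (d : ℕ) (hd : 1 ≤ d) (ρ : ℝ) (hρ : 0 < ρ)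
    (F : Matrix (Fin d) (Fin d) ℝ) (a : Fin d → ℝ)
    (bstar : Fin d → ℝ)
    (hbstar : bstar = ρ • ((1 + ρ • (F * Fᵀ))⁻¹.mulVec (F.mulVec a))) :
    IsUnit (1 + ρ • (Fᵀ * F)) ∧
      ρ * ∑ i, ((Fᵀ.mulVec bstar - a) i) ^ 2 + ∑ i, (bstar i) ^ 2
        = ρ * (a ⬝ᵥ (1 + ρ • (Fᵀ * F))⁻¹.mulVec a) := by
  subst hbstar
  simpa [effectiveNoiseEnergy, conjTranspose_eq_transpose_of_trivial, dotProduct, sq] using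
    IF_effective_noise_energy_general hρ.le F a
end

section
/- Fix d ≥ 1 and ρ > 0. Let Σ be a d×d real diagonal matrix with positive diagonal entries σ₁, …, σ_d, let L be an invertible d×d real matrix with LLᵀ = (I_d + ρΣᵀΣ)⁻¹, let P be a d×d real orthogonal matrix with d_p(P) = inf over nonzero u ∈ ℤ^d of ∏_{m=1}^{d} |(Pu)_m| satisfying d_p(P) > 0, and set L_p = PᵀL. Then for every nonzero v ∈ ℤ^d, ‖L_p⁻¹v‖² ≥ d · ρ · (∏_{m=1}^{d} σ_m²)^{1/d} · d_p(P)^{2/d}; in particular the squared minimum distance of the lattice {L_p⁻¹v : v ∈ ℤ^d} grows at least linearly in ρ. -/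
open Matrix Finset

/-! Since `L Lᵀ = A⁻¹` with `A = diagonal (1 + ρ σ_m²)` and `L_p⁻¹ = L⁻¹ P`, the squared norm
`‖L_p⁻¹ v‖²` is the diagonal quadratic form `∑ (1 + ρ σ_m²) (P v)_m²`. By AM-GM it is at least `d`
times the geometric mean of its terms, which separates into the geometric mean of the weights
`1 + ρ σ_m² ≥ ρ σ_m²` and the product `∏ |(P v)_m|`, bounded below by the minimum product
distance. -/

/-- The minimum product distance `d_p(P)` of the lattice generated by `P`: the infimum of the
products of the absolute coordinates of its points `P u`, over nonzero integer vectors `u`. The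
infimum of an empty set of reals being `0`, it is `0` when `P` has no columns. -/
noncomputable def minProductDistance {m n : Type*} [Fintype m] [Fintype n]
    (P : Matrix m n ℝ) : ℝ :=
  sInf {x : ℝ | ∃ u : n → ℤ, u ≠ 0 ∧ x = ∏ i, |P.mulVec (fun j => (u j : ℝ)) i|}

section MinProductDistance

variable {m n : Type*} [Fintype m] [Fintype n] (P : Matrix m n ℝ)

theorem minProductDistance_nonneg : 0 ≤ minProductDistance P := by
  refine Real.sInf_nonneg ?_
  rintro x ⟨u, -, rfl⟩
  positivity

theorem minProductDistance_le_prod_abs_mulVec {v : n → ℤ} (hv : v ≠ 0) :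
    minProductDistance P ≤ ∏ i, |(P *ᵥ fun j => (v j : ℝ)) i| := by
  refine csInf_le ⟨0, ?_⟩ ⟨v, hv, rfl⟩
  rintro x ⟨u, -, rfl⟩
  positivity

end MinProductDistance

section GeometricMean

variable {ι : Type*} [Fintype ι]

theorem card_mul_prod_rpow_le_sum {x : ι → ℝ} (hx : ∀ i, 0 ≤ x i) :
    Fintype.card ι * (∏ i, x i) ^ ((1 : ℝ) / Fintype.card ι) ≤ ∑ i, x i := by
  cases isEmpty_or_nonempty ι
  · simp
  have hcard : (0 : ℝ) < Fintype.card ι := by exact_mod_cast Fintype.card_pos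
  have amgm := Real.geom_mean_le_arith_mean univ (fun _ => (1 : ℝ)) x (fun _ _ => zero_le_one)
    (by simpa using hcard) (fun i _ => hx i)
  simp only [Real.rpow_one, sum_const, card_univ, nsmul_eq_mul, mul_one, one_mul,
    le_div_iff₀ hcard] at amgm
  rwa [one_div, mul_comm]

theorem card_mul_prod_rpow_mul_prod_abs_rpow_le_sum {a : ι → ℝ} (ha : ∀ i, 0 ≤ a i)
    (w : ι → ℝ) :
    Fintype.card ι * (∏ i, a i) ^ ((1 : ℝ) / Fintype.card ι) *
      (∏ i, |w i|) ^ ((2 : ℝ) / Fintype.card ι) ≤ ∑ i, a i * w i ^ 2 := by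
  have hprod : 0 ≤ ∏ i, a i := prod_nonneg fun i _ => ha i
  calc Fintype.card ι * (∏ i, a i) ^ ((1 : ℝ) / Fintype.card ι) *
        (∏ i, |w i|) ^ ((2 : ℝ) / Fintype.card ι)
      = Fintype.card ι * (∏ i, a i) ^ ((1 : ℝ) / Fintype.card ι) *
          ((∏ i, |w i|) ^ 2) ^ ((1 : ℝ) / Fintype.card ι) := by
        rw [← Real.rpow_natCast_mul (by positivity), Nat.cast_ofNat, mul_one_div]
    _ = Fintype.card ι * (∏ i, a i * w i ^ 2) ^ ((1 : ℝ) / Fintype.card ι) := by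
        rw [mul_assoc, ← Real.mul_rpow hprod (by positivity), ← prod_pow, ← prod_mul_distrib]
        simp only [sq_abs]
    _ ≤ ∑ i, a i * w i ^ 2 :=
        card_mul_prod_rpow_le_sum fun i => mul_nonneg (ha i) (sq_nonneg _)

theorem mul_prod_rpow_le_prod_one_add_mul_rpow [Nonempty ι] {r : ℝ} (hr : 0 ≤ r) {b : ι → ℝ}
    (hb : ∀ i, 0 ≤ b i) :
    r * (∏ i, b i) ^ ((1 : ℝ) / Fintype.card ι) ≤
      (∏ i, (1 + r * b i)) ^ ((1 : ℝ) / Fintype.card ι) := by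
  have hrb (i : ι) : 0 ≤ r * b i := mul_nonneg hr (hb i)
  calc r * (∏ i, b i) ^ ((1 : ℝ) / Fintype.card ι)
      = (∏ i, r * b i) ^ ((1 : ℝ) / Fintype.card ι) := by
        rw [prod_mul_distrib, prod_const, card_univ,
          Real.mul_rpow (by positivity) (prod_nonneg fun i _ => hb i), one_div,
          Real.pow_rpow_inv_natCast hr Fintype.card_ne_zero]
    _ ≤ (∏ i, (1 + r * b i)) ^ ((1 : ℝ) / Fintype.card ι) := by
        gcongr with i
        · exact prod_nonneg fun i _ => hrb i
        · exact fun i _ => hrb i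
        · exact le_add_of_nonneg_left zero_le_one

end GeometricMean

section QuadraticForm

variable {n : Type*} [Fintype n] [DecidableEq n]

theorem one_add_smul_transpose_diagonal_mul_diagonal {R : Type*} [CommSemiring R] (r : R)
    (s : n → R) :
    1 + r • ((diagonal s)ᵀ * diagonal s) = diagonal fun i => 1 + r * s i ^ 2 := by
  rw [diagonal_transpose, diagonal_mul_diagonal, ← diagonal_one, ← diagonal_smul, diagonal_add]
  simp only [Pi.smul_apply, smul_eq_mul, sq]

theorem inv_mulVec_dotProduct_self {R : Type*} [CommRing R] {A L : Matrix n n R}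
    (hA : IsUnit A.det) (hL : L * Lᵀ = A⁻¹) (w : n → R) :
    (L⁻¹ *ᵥ w) ⬝ᵥ (L⁻¹ *ᵥ w) = w ⬝ᵥ (A *ᵥ w) := by
  have gram : (L⁻¹)ᵀ * L⁻¹ = A := by
    rw [transpose_nonsing_inv, ← Matrix.mul_inv_rev, hL, nonsing_inv_nonsing_inv _ hA]
  rw [← gram, ← mulVec_mulVec, dotProduct_mulVec w, vecMul_transpose]

theorem sum_sq_inv_mulVec_of_mul_transpose_eq_inv_diagonal {K : Type*} [Field K]
    {L : Matrix n n K} {a : n → K} (ha : ∀ i, a i ≠ 0) (hL : L * Lᵀ = (diagonal a)⁻¹)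
    (w : n → K) :
    ∑ i, (L⁻¹ *ᵥ w) i ^ 2 = ∑ i, a i * w i ^ 2 := by
  have hdet : IsUnit (diagonal a).det := by
    rw [det_diagonal, isUnit_iff_ne_zero]
    exact prod_ne_zero_iff.mpr fun i _ => ha i
  calc ∑ i, (L⁻¹ *ᵥ w) i ^ 2 = (L⁻¹ *ᵥ w) ⬝ᵥ (L⁻¹ *ᵥ w) := by simp only [dotProduct, sq]
    _ = w ⬝ᵥ (diagonal a *ᵥ w) := inv_mulVec_dotProduct_self hdet hL w
    _ = ∑ i, a i * w i ^ 2 := by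
      simp only [dotProduct, mulVec_diagonal]
      exact sum_congr rfl fun i _ => by ring

theorem card_mul_prod_rpow_mul_minProductDistance_rpow_le {k : Type*} [Fintype k]
    {L : Matrix n n ℝ} {a : n → ℝ} (ha : ∀ i, 0 < a i) (hL : L * Lᵀ = (diagonal a)⁻¹)
    (P : Matrix n k ℝ) {v : k → ℤ} (hv : v ≠ 0) :
    Fintype.card n * (∏ i, a i) ^ ((1 : ℝ) / Fintype.card n) *
        minProductDistance P ^ ((2 : ℝ) / Fintype.card n) ≤
      ∑ i, ((L⁻¹ * P) *ᵥ fun j => (v j : ℝ)) i ^ 2 := by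
  set w : n → ℝ := P *ᵥ fun j => (v j : ℝ)
  have hprod : 0 ≤ ∏ i, a i := prod_nonneg fun i _ => (ha i).le
  calc Fintype.card n * (∏ i, a i) ^ ((1 : ℝ) / Fintype.card n) *
        minProductDistance P ^ ((2 : ℝ) / Fintype.card n)
      ≤ Fintype.card n * (∏ i, a i) ^ ((1 : ℝ) / Fintype.card n) *
          (∏ i, |w i|) ^ ((2 : ℝ) / Fintype.card n) := by
        gcongr
        · exact minProductDistance_nonneg P
        · exact minProductDistance_le_prod_abs_mulVec P hv
    _ ≤ ∑ i, a i * w i ^ 2 :=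
        card_mul_prod_rpow_mul_prod_abs_rpow_le_sum (fun i => (ha i).le) w
    _ = ∑ i, ((L⁻¹ * P) *ᵥ fun j => (v j : ℝ)) i ^ 2 := by
        rw [← mulVec_mulVec,
          sum_sq_inv_mulVec_of_mul_transpose_eq_inv_diagonal (fun i => (ha i).ne') hL]

end QuadraticForm

/-- Deterministic core of full diversity for Type II UPIF: with `Σ = diagonal σ` (positive
`σ_m`), `L` invertible with `L Lᵀ = (I + ρ Σᵀ Σ)⁻¹`, `P` orthogonal with positive minimum
product distance `d_p(P)`, and `L_p = Pᵀ L`, every nonzero integer vector `v` satisfies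
`‖L_p⁻¹ v‖² ≥ d · ρ · (∏_m σ_m²)^(1/d) · d_p(P)^(2/d)`. -/
theorem typeII_UPIF_full_diversity_core (d : ℕ) (hd : 1 ≤ d) (ρ : ℝ) (hρ : 0 < ρ)
    (σ : Fin d → ℝ) (hσ : ∀ m, 0 < σ m)
    (L : Matrix (Fin d) (Fin d) ℝ) (hL : IsUnit L)
    (hLLt : L * Lᵀ = (1 + ρ • ((Matrix.diagonal σ)ᵀ * Matrix.diagonal σ))⁻¹)
    (P : Matrix (Fin d) (Fin d) ℝ) (hP : Pᵀ * P = 1)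
    (dp : ℝ)
    (hdp : dp = sInf {x : ℝ | ∃ u : Fin d → ℤ, u ≠ 0 ∧
      x = ∏ m, |P.mulVec (fun i => (u i : ℝ)) m|})
    (hdp_pos : 0 < dp)
    (Lp : Matrix (Fin d) (Fin d) ℝ) (hLp : Lp = Pᵀ * L) :
    ∀ v : Fin d → ℤ, v ≠ 0 →
      ∑ i, (Lp⁻¹.mulVec (fun i => (v i : ℝ)) i) ^ 2 ≥
        d * ρ * (∏ m, (σ m) ^ 2) ^ ((1 : ℝ) / d) * dp ^ ((2 : ℝ) / d) := by
  intro v hv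
  have : Nonempty (Fin d) := Fin.pos_iff_nonempty.mp hd
  have hweight (m : Fin d) : 0 < 1 + ρ * σ m ^ 2 := by positivity
  have hLp_inv : Lp⁻¹ = L⁻¹ * P := by rw [hLp, Matrix.mul_inv_rev, inv_eq_right_inv hP]
  rw [one_add_smul_transpose_diagonal_mul_diagonal] at hLLt
  have hgeom := mul_prod_rpow_le_prod_one_add_mul_rpow hρ.le fun m => sq_nonneg (σ m)
  have hbound := card_mul_prod_rpow_mul_minProductDistance_rpow_le hweight hLLt P hv
  rw [Fintype.card_fin] at hgeom hbound
  calc d * ρ * (∏ m, σ m ^ 2) ^ ((1 : ℝ) / d) * dp ^ ((2 : ℝ) / d)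
      = d * (ρ * (∏ m, σ m ^ 2) ^ ((1 : ℝ) / d)) * dp ^ ((2 : ℝ) / d) := by ring
    _ ≤ d * (∏ m, (1 + ρ * σ m ^ 2)) ^ ((1 : ℝ) / d) * dp ^ ((2 : ℝ) / d) := by gcongr
    _ = d * (∏ m, (1 + ρ * σ m ^ 2)) ^ ((1 : ℝ) / d) *
          minProductDistance P ^ ((2 : ℝ) / d) := by rw [hdp, minProductDistance]
    _ ≤ ∑ i, (Lp⁻¹ *ᵥ fun i => (v i : ℝ)) i ^ 2 := by rwa [hLp_inv]
end

section
/- Let α be a nonnegative real random variable on a probability space, and let q ≥ 0 and δ > 0 be real numbers such that P(α ≤ x) ≤ q·x^δ for every x ≥ 0. Then for every s > 0, E[exp(−sα)] ≤ q·Γ(δ+1)·s^{−δ}, where Γ denotes the Gamma function. -/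
open MeasureTheory ProbabilityTheory

/-!
By the layer-cake formula in the variable `t = exp (-s x)`, the Laplace transform of `X` at `s` is
the integral of `P(X ≤ x)` against `s exp (-s x) dx`. Bounding the tail by `q x ^ δ` turns this
integral into Euler's integral for `q Γ(δ + 1) s ^ (-δ)`.
-/

open Set

lemma lintegral_exp_neg_mul_eq_lintegral_meas_le {Ω : Type*} [MeasurableSpace Ω] {μ : Measure Ω}
    {X : Ω → ℝ} (hX : AEMeasurable X μ) {s : ℝ} (hs : 0 < s) :
    ∫⁻ ω, ENNReal.ofReal (Real.exp (-s * X ω)) ∂μ =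
      ∫⁻ x, ENNReal.ofReal (s * Real.exp (-s * x)) * μ {ω | X ω ≤ x} := by
  have hderiv (x : ℝ) : HasDerivAt (fun x ↦ Real.exp (-s * x)) (Real.exp (-s * x) * -s) x :=
    (hasDerivAt_const_mul (-s)).exp
  have hinj : Function.Injective fun x ↦ Real.exp (-s * x) :=
    Real.exp_injective.comp (mul_right_injective₀ (neg_ne_zero.mpr hs.ne'))
  have himage : (fun x ↦ Real.exp (-s * x)) '' univ = Ioi 0 := by
    rw [image_univ, ← Real.range_exp]
    exact (mul_left_surjective₀ (neg_ne_zero.mpr hs.ne')).range_comp Real.exp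
  have hmem (x ω) : Real.exp (-s * x) ≤ Real.exp (-s * X ω) ↔ X ω ≤ x := by
    rw [Real.exp_le_exp, mul_le_mul_left_of_neg (neg_lt_zero.mpr hs)]
  calc
    _ = ∫⁻ t in Ioi 0, μ {ω | t ≤ Real.exp (-s * X ω)} :=
      lintegral_eq_lintegral_meas_le μ (ae_of_all _ fun ω ↦ (Real.exp_pos _).le)
        (Real.measurable_exp.comp_aemeasurable (hX.const_mul (-s)))
    _ = ∫⁻ x, ENNReal.ofReal |Real.exp (-s * x) * -s| *
          μ {ω | Real.exp (-s * x) ≤ Real.exp (-s * X ω)} := by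
      rw [← himage, lintegral_image_eq_lintegral_abs_deriv_mul MeasurableSet.univ
        (fun x _ ↦ (hderiv x).hasDerivWithinAt) hinj.injOn, setLIntegral_univ]
    _ = _ := by
      simp only [hmem, abs_mul, abs_neg, Real.abs_exp, abs_of_pos hs, mul_comm s]

lemma lintegral_mul_exp_neg_mul_rpow {δ s : ℝ} (hδ : -1 < δ) (hs : 0 < s) :
    ∫⁻ x in Ioi 0, ENNReal.ofReal (s * Real.exp (-s * x)) * ENNReal.ofReal (x ^ δ) =
      ENNReal.ofReal (Real.Gamma (δ + 1) * s ^ (-δ)) := by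
  have hint : IntegrableOn (fun x : ℝ ↦ s * (x ^ δ * Real.exp (-s * x))) (Ioi 0) := by
    simpa only [Real.rpow_one, IntegrableOn] using
      (integrableOn_rpow_mul_exp_neg_mul_rpow hδ one_pos hs).const_mul s
  have hnonneg : ∀ᵐ x ∂volume.restrict (Ioi 0), 0 ≤ s * (x ^ δ * Real.exp (-s * x)) := by
    filter_upwards [ae_restrict_mem measurableSet_Ioi] with x (hx : 0 < x)
    positivity
  have hEuler : ∫ x in Ioi 0, x ^ δ * Real.exp (-s * x) =
      (1 / s) ^ (δ + 1) * Real.Gamma (δ + 1) := by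
    simpa only [add_sub_cancel_right, ← neg_mul] using
      Real.integral_rpow_mul_exp_neg_mul_Ioi (neg_lt_iff_pos_add.mp hδ) hs
  have hpow : s * (1 / s) ^ (δ + 1) = s ^ (-δ) := by
    rw [one_div, Real.inv_rpow hs.le, Real.rpow_add_one hs.ne', Real.rpow_neg hs.le]
    field_simp
  calc
    _ = ∫⁻ x in Ioi 0, ENNReal.ofReal (s * (x ^ δ * Real.exp (-s * x))) :=
      lintegral_congr fun x ↦ by rw [← ENNReal.ofReal_mul (by positivity)]; ring_nf
    _ = ENNReal.ofReal (s * ((1 / s) ^ (δ + 1) * Real.Gamma (δ + 1))) := by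
      rw [← ofReal_integral_eq_lintegral_ofReal hint hnonneg, integral_const_mul, hEuler]
    _ = _ := by rw [← mul_assoc, hpow, mul_comm]

lemma lintegral_exp_neg_mul_le_of_meas_le_mul_rpow {Ω : Type*} [MeasurableSpace Ω]
    {μ : Measure Ω} {X : Ω → ℝ} (hX : AEMeasurable X μ) (hX0 : 0 ≤ᵐ[μ] X) {q : ENNReal} {δ : ℝ}
    (hδ : -1 < δ) (htail : ∀ x, 0 < x → μ {ω | X ω ≤ x} ≤ q * ENNReal.ofReal (x ^ δ))
    {s : ℝ} (hs : 0 < s) :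
    ∫⁻ ω, ENNReal.ofReal (Real.exp (-s * X ω)) ∂μ ≤
      q * ENNReal.ofReal (Real.Gamma (δ + 1) * s ^ (-δ)) := by
  have hneg (x : ℝ) (hx : x < 0) : μ {ω | X ω ≤ x} = 0 :=
    measure_eq_zero_iff_ae_notMem.mpr (hX0.mono fun ω h ↦ (hx.trans_le h).not_ge)
  calc
    _ = ∫⁻ x, ENNReal.ofReal (s * Real.exp (-s * x)) * μ {ω | X ω ≤ x} :=
      lintegral_exp_neg_mul_eq_lintegral_meas_le hX hs
    _ = ∫⁻ x in Ici 0, ENNReal.ofReal (s * Real.exp (-s * x)) * μ {ω | X ω ≤ x} := by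
      refine (setLIntegral_eq_of_support_subset <|
        Function.support_subset_iff'.mpr fun x hx ↦ ?_).symm
      rw [hneg x (notMem_Ici.mp hx), mul_zero]
    _ = ∫⁻ x in Ioi 0, ENNReal.ofReal (s * Real.exp (-s * x)) * μ {ω | X ω ≤ x} :=
      setLIntegral_congr Ioi_ae_eq_Ici.symm
    _ ≤ ∫⁻ x in Ioi 0,
          q * (ENNReal.ofReal (s * Real.exp (-s * x)) * ENNReal.ofReal (x ^ δ)) := by
      refine setLIntegral_mono' measurableSet_Ioi fun x hx ↦ ?_
      rw [mul_left_comm q]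
      gcongr
      exact htail x hx
    _ = q * ENNReal.ofReal (Real.Gamma (δ + 1) * s ^ (-δ)) := by
      rw [lintegral_const_mul _ (by fun_prop), lintegral_mul_exp_neg_mul_rpow hδ hs]

theorem tail_bound_to_laplace_decay_general {Ω : Type*} [MeasurableSpace Ω] {μ : Measure Ω}
    {X : Ω → ℝ} (hX : AEMeasurable X μ) (hX0 : 0 ≤ᵐ[μ] X) {q δ : ℝ} (hq : 0 ≤ q) (hδ : -1 < δ)
    (htail : ∀ x, 0 < x → μ {ω | X ω ≤ x} ≤ ENNReal.ofReal (q * x ^ δ)) {s : ℝ} (hs : 0 < s) :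
    Integrable (fun ω ↦ Real.exp (-s * X ω)) μ ∧
      ∫ ω, Real.exp (-s * X ω) ∂μ ≤ q * Real.Gamma (δ + 1) * s ^ (-δ) := by
  have hmeas : AEStronglyMeasurable (fun ω ↦ Real.exp (-s * X ω)) μ :=
    (Real.measurable_exp.comp_aemeasurable (hX.const_mul (-s))).aestronglyMeasurable
  have hnonneg : 0 ≤ᵐ[μ] fun ω ↦ Real.exp (-s * X ω) := ae_of_all _ fun ω ↦ (Real.exp_pos _).le
  have hΓ : 0 < Real.Gamma (δ + 1) := Real.Gamma_pos_of_pos (neg_lt_iff_pos_add.mp hδ)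
  have hle : ∫⁻ ω, ENNReal.ofReal (Real.exp (-s * X ω)) ∂μ ≤
      ENNReal.ofReal (q * Real.Gamma (δ + 1) * s ^ (-δ)) := by
    rw [mul_assoc, ENNReal.ofReal_mul hq]
    simp only [ENNReal.ofReal_mul hq] at htail
    exact lintegral_exp_neg_mul_le_of_meas_le_mul_rpow hX hX0 hδ htail hs
  refine ⟨(lintegral_ofReal_ne_top_iff_integrable hmeas hnonneg).mp
    (hle.trans_lt ENNReal.ofReal_lt_top).ne, ?_⟩
  rw [integral_eq_lintegral_of_nonneg_ae hnonneg hmeas]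
  exact ENNReal.toReal_le_of_le_ofReal (by positivity) hle

/-- Converting a polynomial lower-tail bound into polynomial decay of the Laplace transform:
if `α ≥ 0` satisfies `P(α ≤ x) ≤ q x^δ` for all `x ≥ 0`, then for every `s > 0`,
`E[exp (-s α)] ≤ q Γ(δ + 1) s^(-δ)`. -/
theorem tail_bound_to_laplace_decay
    {Ω : Type*} [MeasureSpace Ω] [IsProbabilityMeasure (ℙ : Measure Ω)]
    (α : Ω → ℝ) (hαmeas : Measurable α) (hαnonneg : ∀ ω, 0 ≤ α ω)
    (q δ : ℝ) (hq : 0 ≤ q) (hδ : 0 < δ)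
    (htail : ∀ x : ℝ, 0 ≤ x → (ℙ {ω | α ω ≤ x}).toReal ≤ q * x ^ δ) :
    ∀ s : ℝ, 0 < s →
      (∫ ω, Real.exp (-s * α ω) ∂ℙ) ≤ q * Real.Gamma (δ + 1) * s ^ (-δ) :=
  fun _ hs ↦ (tail_bound_to_laplace_decay_general hαmeas.aemeasurable (ae_of_all _ hαnonneg) hq
    (by linarith) (fun x hx ↦ (ENNReal.le_ofReal_iff_toReal_le (measure_ne_top _ _)
      (by positivity)).mpr (htail x hx.le)) hs).2
end
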